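/- Suppose q ≠ 2. Then the number of codewords of Hamming weight 4 in the dual code C_{(1,q+1,q^2)}^⊥ equals q(q²−1)(q−1)(q−2)/24. -/

import Mathlib

open scoped Classical

/-- The number of indices `i` (with `0 ≤ i ≤ q`) where `V i = s`. -/
noncomputable def occr {n : ℕ} {F : Type} (s : F) (V : Fin n → F) : ℕ :=
  (Finset.filter (fun i => V i = s) Finset.univ).card

/-- The Hamming weight of a vector: the number of its nonzero entries. -/
noncomputable def hwt {n : ℕ} {F : Type} [Zero F] (V : Fin n → F) : ℕ :=
  (Finset.filter (fun i => V i ≠ 0) Finset.univ).card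

/-- The codeword `c(β) = (Tr(β·γ^{(q−1)i}))_{i=0}^{q}` of the irreducible cyclic code
`C_{(q+1,q²)}`. -/
noncomputable def cw (q : ℕ) (F : Type) {K : Type} [Field F] [Field K] [Algebra F K]
    (γ : Kˣ) (β : K) : Fin (q + 1) → F :=
  fun i => Algebra.trace F K (β * (γ : K) ^ (((q : ℤ) - 1) * ((i : ℕ) : ℤ)))

/-- The cyclic code `C_{(1,q+1,q²)} ⊆ F_q^{q+1}`, consisting of the vectors
`c(α,β)_i = α + Tr(β·γ^{(q−1)i})` for `α ∈ F_q`, `β ∈ F_{q²}`. -/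
noncomputable def code (q : ℕ) (F : Type) {K : Type} [Field F] [Fintype F] [Field K]
    [Fintype K] [Algebra F K] (γ : Kˣ) : Finset (Fin (q + 1) → F) :=
  Finset.image (fun p : F × K => fun i : Fin (q + 1) => p.1 + cw q F γ p.2 i) Finset.univ

/-- The dual code `C_{(1,q+1,q²)}^⊥ = {v ∈ F_q^{q+1} : ∑ i, v i · c i = 0 for all
`c ∈ C_{(1,q+1,q²)}`}`. -/
noncomputable def dualCode (q : ℕ) (F : Type) {K : Type} [Field F] [Fintype F] [Field K]
    [Fintype K] [Algebra F K] (γ : Kˣ) : Finset (Fin (q + 1) → F) :=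
  Finset.filter (fun v => ∀ c ∈ code q F γ, ∑ i, v i * c i = 0) Finset.univ

/-!
The dual code is the kernel of `v ↦ (∑ i, v i, ∑ i, v i • u i)`, where `u i` runs over the
`(q + 1)`-st roots of unity in `K`. Since `u i ^ q = (u i)⁻¹`, applying Frobenius to the second
equation shows that `∑ i, v i • (u i) ^ k` vanishes for the three consecutive exponents
`k = -1, 0, 1`, so nonzero codewords have weight at least `4` by the BCH bound. The code has
codimension at most `3`, hence it is MDS, and in an MDS code of minimum distance `d` every
`d`-subset of coordinates is the support of exactly `q - 1` codewords.
-/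

section MDS

open Finset Function

variable {ι F : Type*} [Fintype ι] [Field F] [DecidableEq F]

/-- A linear code all of whose nonzero words have weight at least `d` and which attains the
Singleton bound `dim C + d ≤ card ι + 1`; that bound being automatic for `C ≠ ⊥`, only the reverse
inequality is required. By this convention the zero code is MDS for every `d > card ι`. -/
structure IsMDS (C : Submodule F (ι → F)) (d : ℕ) : Prop where
  card_lt_finrank_add : Fintype.card ι < Module.finrank F C + d
  le_hammingNorm : ∀ v ∈ C, v ≠ 0 → d ≤ hammingNorm v

namespace IsMDS

variable {C : Submodule F (ι → F)} {d : ℕ} {S : Finset ι} {v w : ι → F}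

lemma pos (hC : IsMDS C d) : 0 < d := by
  have hle : Module.finrank F C ≤ Fintype.card ι := by
    simpa only [Module.finrank_fintype_fun_eq_card] using C.finrank_le
  have := hC.card_lt_finrank_add
  omega

lemma eq_zero_of_support_ssubset (hC : IsMDS C d) (hS : #S = d) (hv : v ∈ C)
    (hsupp : support v ⊂ S) : v = 0 := by
  by_contra hv0
  have hlt : hammingNorm v < #S := card_lt_card <| by
    rwa [← coe_ssubset, coe_filter_univ]
  exact (hC.le_hammingNorm v hv hv0).not_gt (hS ▸ hlt)

lemma ne_zero_of_support_eq (hC : IsMDS C d) (hS : #S = d) (hvS : support v = S) : v ≠ 0 := by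
  rw [← support_nonempty_iff, hvS, coe_nonempty, ← card_pos, hS]
  exact hC.pos

/-- Vanishing outside `S` imposes only `card ι - d < dim C` linear conditions on a codeword. -/
lemma exists_support_eq (hC : IsMDS C d) (hS : #S = d) : ∃ w ∈ C, support w = S := by
  classical
  let restrict : C →ₗ[F] ({i // i ∉ S} → F) := LinearMap.funLeft F F Subtype.val ∘ₗ C.subtype
  have hker : LinearMap.ker restrict ≠ ⊥ := by
    apply LinearMap.ker_ne_bot_of_finrank_lt
    have hcompl : Fintype.card {i // i ∉ S} = Fintype.card ι - d := by
      rw [Fintype.card_subtype_compl, Fintype.card_coe, hS]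
    have hd : d ≤ Fintype.card ι := hS ▸ S.card_le_univ
    have := hC.card_lt_finrank_add
    rw [Module.finrank_fintype_fun_eq_card]
    omega
  obtain ⟨⟨w, hwC⟩, hw, hw0⟩ := (Submodule.ne_bot_iff _).1 hker
  have hsub : support w ⊆ S := fun i hi => by
    by_contra hiS
    exact hi (congrFun hw ⟨i, hiS⟩)
  refine ⟨w, hwC, hsub.eq_of_not_ssubset fun hss => hw0 ?_⟩
  exact Subtype.ext (hC.eq_zero_of_support_ssubset hS hwC hss)

lemma exists_smul_eq_of_support_subset (hC : IsMDS C d) (hS : #S = d) (hw : w ∈ C)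
    (hwS : support w = S) (hv : v ∈ C) (hvS : support v ⊆ S) : ∃ c : F, c • w = v := by
  obtain ⟨s, hs⟩ : S.Nonempty := card_pos.1 (hS ▸ hC.pos)
  have hws : w s ≠ 0 := by
    rw [← mem_support, hwS]
    exact hs
  refine ⟨v s / w s, (sub_eq_zero.1 ?_).symm⟩
  have hmem : v - (v s / w s) • w ∈ C := C.sub_mem hv (C.smul_mem _ hw)
  have hsub : support (v - (v s / w s) • w) ⊆ S :=
    (support_sub _ _).trans
      (Set.union_subset hvS ((support_const_smul_subset _ _).trans hwS.subset))
  refine hC.eq_zero_of_support_ssubset hS hmem (hsub.ssubset_of_mem_notMem hs ?_)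
  simp [hws]

variable [DecidableEq ι] [Fintype F]

lemma card_support_eq [DecidablePred (· ∈ C)] (hC : IsMDS C d) (hS : #S = d) :
    #{v | v ∈ C ∧ ({i | v i ≠ 0} : Finset ι) = S} = Fintype.card F - 1 := by
  obtain ⟨w, hw, hwS⟩ := hC.exists_support_eq hS
  have hw0 : w ≠ 0 := hC.ne_zero_of_support_eq hS hwS
  have hinj : Injective fun c : Fˣ => (c : F) • w :=
    (smul_left_injective F hw0).comp Units.val_injective
  have himage : ({v | v ∈ C ∧ ({i | v i ≠ 0} : Finset ι) = S} : Finset (ι → F))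
      = univ.image fun c : Fˣ => (c : F) • w := by
    ext v
    simp only [mem_filter_univ, mem_image, mem_univ, true_and, ← coe_inj, coe_filter]
    constructor
    · rintro ⟨hv, hvS⟩
      obtain ⟨c, rfl⟩ := hC.exists_smul_eq_of_support_subset hS hw hwS hv hvS.subset
      have hc : c ≠ 0 := left_ne_zero_of_smul (hC.ne_zero_of_support_eq hS hvS)
      exact ⟨Units.mk0 c hc, rfl⟩
    · rintro ⟨c, rfl⟩
      refine ⟨C.smul_mem _ hw, ?_⟩
      rw [← hwS]
      ext i
      simp
  rw [himage, card_image_of_injective _ hinj, card_univ, Fintype.card_units]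

theorem card_hammingNorm_eq [DecidablePred (· ∈ C)] (hC : IsMDS C d) :
    #{v | v ∈ C ∧ hammingNorm v = d} = (Fintype.card ι).choose d * (Fintype.card F - 1) := by
  have hmaps : ∀ v ∈ ({v | v ∈ C ∧ hammingNorm v = d} : Finset (ι → F)),
      ({i | v i ≠ 0} : Finset ι) ∈ powersetCard d univ := fun v hv =>
    mem_powersetCard.2 ⟨subset_univ _, (mem_filter_univ v).1 hv |>.2⟩
  rw [card_eq_sum_card_fiberwise hmaps, sum_const_nat (m := Fintype.card F - 1),
    card_powersetCard, card_univ]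
  intro S hS
  have hSd : #S = d := (mem_powersetCard.1 hS).2
  rw [← hC.card_support_eq hSd, filter_filter]
  congr 1
  ext v
  simp only [mem_filter_univ, and_assoc, and_congr_right_iff, and_iff_right_iff_imp]
  rintro - rfl
  exact hSd

end IsMDS

end MDS

section BCHBound

open Finset

variable {ι R : Type*} [Fintype ι] [DecidableEq R] {u v : ι → R} {m : ℕ}

lemma lt_hammingNorm_of_forall_sum_mul_pow_eq_zero [CommRing R] [IsDomain R]
    (hu : Function.Injective u) (hv : v ≠ 0) (h : ∀ k < m, ∑ i, v i * u i ^ k = 0) :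
    m < hammingNorm v := by
  by_contra! hle
  obtain ⟨i, hi⟩ := Function.ne_iff.1 hv
  let e : Fin (hammingNorm v) ≃ {i // v i ≠ 0} :=
    (Fintype.equivFinOfCardEq (Fintype.card_subtype _)).symm
  have hrestrict : (fun j => v (e j)) = 0 := by
    refine Matrix.eq_zero_of_forall_pow_sum_mul_pow_eq_zero
      (hu.comp (Subtype.val_injective.comp e.injective)) fun k => ?_
    calc ∑ j, v (e j) * u (e j) ^ (k : ℕ)
        = ∑ i : {i // v i ≠ 0}, v i * u i ^ (k : ℕ) :=
          e.sum_comp fun i : {i // v i ≠ 0} => v i * u i ^ (k : ℕ)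
      _ = ∑ i with v i ≠ 0, v i * u i ^ (k : ℕ) :=
          (sum_subtype _ (fun i => mem_filter_univ i) fun i => v i * u i ^ (k : ℕ)).symm
      _ = ∑ i, v i * u i ^ (k : ℕ) := sum_filter_of_ne fun i _ => left_ne_zero_of_mul
      _ = 0 := h k (k.2.trans_le hle)
  exact hi (by simpa using congrFun hrestrict (e.symm ⟨i, hi⟩))

/-- The BCH bound: scaling `v i` by `u i ^ b` shifts the exponents to `0, …, m - 1`. -/
lemma lt_hammingNorm_of_forall_sum_mul_zpow_eq_zero [Field R]
    (hu : Function.Injective u) (hu0 : ∀ i, u i ≠ 0) (hv : v ≠ 0) (b : ℤ)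
    (h : ∀ k < m, ∑ i, v i * u i ^ (b + k) = 0) : m < hammingNorm v := by
  have hnorm : hammingNorm (fun i => v i * u i ^ b) = hammingNorm v :=
    hammingNorm_comp (fun i x => x * u i ^ b)
      (fun i => mul_left_injective₀ (zpow_ne_zero b (hu0 i))) fun i => zero_mul _
  rw [← hnorm]
  refine lt_hammingNorm_of_forall_sum_mul_pow_eq_zero hu ?_ fun k hk => ?_
  · rwa [← hammingNorm_ne_zero_iff, hnorm, hammingNorm_ne_zero_iff]
  · simpa only [zpow_add₀ (hu0 _), zpow_natCast, mul_assoc] using h k hk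

end BCHBound

section ParityCheck

open Module

variable {ι F K : Type*} [Fintype ι] [Field F] [Field K] [Algebra F K]

variable (F) in
/-- The map `v ↦ (∑ i, v i, ∑ i, v i • u i)`, whose kernel is the dual of the code of all words
`i ↦ a + Tr (b * u i)`. -/
def parityCheck (u : ι → K) : (ι → F) →ₗ[F] F × K :=
  Fintype.linearCombination F fun i => ((1 : F), u i)

lemma mem_ker_parityCheck {u : ι → K} {v : ι → F} :
    v ∈ LinearMap.ker (parityCheck F u) ↔ ∑ i, v i = 0 ∧ ∑ i, v i • u i = 0 := by
  simp [parityCheck, Fintype.linearCombination_apply, Prod.ext_iff, Prod.fst_sum, Prod.snd_sum]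

lemma forall_sum_mul_add_trace_eq_zero_iff [FiniteDimensional F K] [Algebra.IsSeparable F K]
    {u : ι → K} {v : ι → F} :
    (∀ (a : F) (b : K), ∑ i, v i * (a + Algebra.trace F K (b * u i)) = 0) ↔
      v ∈ LinearMap.ker (parityCheck F u) := by
  have hsum (a : F) (b : K) : ∑ i, v i * (a + Algebra.trace F K (b * u i))
      = a * ∑ i, v i + Algebra.trace F K (b * ∑ i, v i • u i) := by
    simp only [mul_add, Finset.sum_add_distrib, Finset.mul_sum, map_sum, mul_smul_comm, map_smul,
      smul_eq_mul]
    simp only [mul_comm a]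
  simp only [hsum, mem_ker_parityCheck]
  constructor
  · intro h
    refine ⟨by simpa using h 1 0, (traceForm_nondegenerate F K).2 _ fun b => ?_⟩
    simpa only [zero_mul, zero_add, Algebra.traceForm_apply] using h 0 b
  · rintro ⟨h₁, h₂⟩ a b
    simp [h₁, h₂]

variable [Fintype F] {u : ι → K}

lemma sum_smul_inv_eq_zero_of_mem_ker_parityCheck (hu : ∀ i, u i ^ (Fintype.card F + 1) = 1)
    {v : ι → F} (hv : v ∈ LinearMap.ker (parityCheck F u)) : ∑ i, v i • (u i)⁻¹ = 0 := by
  have hfrob (i : ι) : u i ^ Fintype.card F = (u i)⁻¹ :=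
    eq_inv_of_mul_eq_one_left (by rw [← pow_succ, hu])
  simpa only [map_sum, map_smul, map_zero, FiniteField.coe_frobeniusAlgHom, hfrob] using
    congrArg (FiniteField.frobeniusAlgHom F K) (mem_ker_parityCheck.1 hv).2

lemma four_le_hammingNorm_of_mem_ker_parityCheck [DecidableEq F] (hinj : Function.Injective u)
    (hu : ∀ i, u i ^ (Fintype.card F + 1) = 1) {v : ι → F}
    (hv : v ∈ LinearMap.ker (parityCheck F u)) (hv0 : v ≠ 0) : 4 ≤ hammingNorm v := by
  classical
  have hu0 (i : ι) : u i ≠ 0 := (IsUnit.of_pow_eq_one (hu i) (Nat.succ_ne_zero _)).ne_zero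
  have hnorm : hammingNorm (fun i => algebraMap F K (v i)) = hammingNorm v :=
    hammingNorm_comp (fun _ => algebraMap F K) (fun _ => (algebraMap F K).injective)
      fun _ => map_zero _
  rw [← hnorm]
  refine lt_hammingNorm_of_forall_sum_mul_zpow_eq_zero (m := 3) hinj hu0 ?_ (-1) fun k hk => ?_
  · rwa [← hammingNorm_ne_zero_iff, hnorm, hammingNorm_ne_zero_iff]
  · obtain ⟨h₀, h₁⟩ := mem_ker_parityCheck.1 hv
    have hinv := sum_smul_inv_eq_zero_of_mem_ker_parityCheck hu hv
    simp only [← Algebra.smul_def]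
    interval_cases k
    · simpa using hinv
    · simpa [Algebra.smul_def, ← map_sum] using congrArg (algebraMap F K) h₀
    · simpa using h₁

lemma isMDS_ker_parityCheck [DecidableEq F] [Algebra.IsQuadraticExtension F K]
    (hinj : Function.Injective u) (hu : ∀ i, u i ^ (Fintype.card F + 1) = 1) :
    IsMDS (LinearMap.ker (parityCheck F u)) 4 where
  card_lt_finrank_add := by
    have hrange : finrank F (LinearMap.range (parityCheck F u)) ≤ 3 := by
      simpa only [finrank_prod, finrank_self, Algebra.IsQuadraticExtension.finrank_eq_two F K]
        using (LinearMap.range (parityCheck F u)).finrank_le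
    have hrank := (parityCheck F u).finrank_range_add_finrank_ker
    rw [finrank_fintype_fun_eq_card] at hrank
    omega
  le_hammingNorm _ := four_le_hammingNorm_of_mem_ker_parityCheck hinj hu

end ParityCheck

lemma isQuadraticExtension_of_card_eq_sq {F K : Type*} [Field F] [Fintype F] [Field K] [Fintype K]
    [Algebra F K] (h : Fintype.card K = Fintype.card F ^ 2) : Algebra.IsQuadraticExtension F K where
  finrank_eq_two' := by
    rw [Module.card_eq_pow_finrank (K := F) (V := K)] at h
    exact Nat.pow_right_injective Fintype.one_lt_card h

lemma isPrimitiveRoot_pow_sub_one {K : Type*} [Field K] [Fintype K] {q : ℕ}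
    (hK : Fintype.card K = q ^ 2) {γ : Kˣ} (hγ : ∀ x : Kˣ, x ∈ Subgroup.zpowers γ) :
    IsPrimitiveRoot ((γ : K) ^ (q - 1)) (q + 1) := by
  have hq : 1 < q := (one_lt_pow_iff two_ne_zero).1 (hK ▸ Fintype.one_lt_card)
  have horder : orderOf γ = (q - 1) * (q + 1) := by
    rw [orderOf_eq_card_of_forall_mem_zpowers hγ, Nat.card_eq_fintype_card, Fintype.card_units, hK,
      mul_comm, ← Nat.sq_sub_sq, one_pow]
  have hγprim : IsPrimitiveRoot (γ : K) ((q - 1) * (q + 1)) :=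
    IsPrimitiveRoot.coe_units_iff.2 (horder ▸ IsPrimitiveRoot.orderOf γ)
  exact hγprim.pow (Nat.mul_pos (by omega) (by omega)) rfl

lemma mem_dualCode_iff {q : ℕ} (hq : 1 ≤ q) {F K : Type} [Field F] [Fintype F] [Field K]
    [Fintype K] [Algebra F K] {γ : Kˣ} {v : Fin (q + 1) → F} :
    v ∈ dualCode q F γ ↔
      v ∈ LinearMap.ker (parityCheck F fun i : Fin (q + 1) => ((γ : K) ^ (q - 1)) ^ (i : ℕ)) := by
  have hpow (i : ℕ) : (γ : K) ^ (((q : ℤ) - 1) * i) = ((γ : K) ^ (q - 1)) ^ i := by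
    rw [← pow_mul, ← zpow_natCast]
    push_cast [hq]
    rfl
  rw [← forall_sum_mul_add_trace_eq_zero_iff]
  simp only [dualCode, code, cw, hpow, Finset.mem_filter_univ, Finset.forall_mem_image,
    Finset.mem_univ, true_imp_iff, Prod.forall]

lemma hwt_eq_hammingNorm {n : ℕ} {F : Type} [Zero F] (v : Fin n → F) : hwt v = hammingNorm v := by
  simp only [hwt, hammingNorm]

lemma cast_succ_choose_four (K : Type*) [Field K] [CharZero K] (q : ℕ) :
    ((q + 1).choose 4 : K) = (q + 1) * q * (q - 1) * (q - 2) / 24 := by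
  have hdesc (x : K) : (descPochhammer K 4).eval x = x * (x - 1) * (x - 2) * (x - 3) := by
    simp [descPochhammer_succ_right]
  have hfact : Nat.factorial 4 = 24 := rfl
  rw [Nat.cast_choose_eq_descPochhammer_div, hdesc, hfact]
  push_cast
  ring

/-- For `q ≠ 2`, the number of codewords of Hamming weight `4` in the dual code
`C_{(1,q+1,q²)}^⊥` equals `q(q²−1)(q−1)(q−2)/24`. -/
theorem dual_code_A4
    (q : ℕ) (F K : Type) [Field F] [Fintype F] [Field K] [Fintype K] [Algebra F K]
    (hF : Fintype.card F = q) (hK : Fintype.card K = q ^ 2)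
    (γ : Kˣ) (hγ : ∀ x : Kˣ, x ∈ Subgroup.zpowers γ)
    (htr : ∀ x : K, algebraMap F K (Algebra.trace F K x) = x + x ^ q)
    (hq2 : q ≠ 2) :
    ((Finset.filter (fun v => hwt v = 4) (dualCode q F γ)).card : ℚ)
      = q * ((q : ℚ) ^ 2 - 1) * ((q : ℚ) - 1) * ((q : ℚ) - 2) / 24 := by
  have hq : 1 < q := hF ▸ Fintype.one_lt_card
  have := isQuadraticExtension_of_card_eq_sq (F := F) (K := K) (by rw [hK, hF])
  have hζ := isPrimitiveRoot_pow_sub_one hK hγ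
  let u : Fin (q + 1) → K := fun i => ((γ : K) ^ (q - 1)) ^ (i : ℕ)
  have hinj : Function.Injective u := fun i j hij => Fin.ext (hζ.pow_inj i.2 j.2 hij)
  have hu (i : Fin (q + 1)) : u i ^ (Fintype.card F + 1) = 1 := by
    rw [hF, pow_right_comm, hζ.pow_eq_one, one_pow]
  have hdual : (dualCode q F γ).filter (fun v => hwt v = 4)
      = Finset.univ.filter fun v => v ∈ LinearMap.ker (parityCheck F u) ∧ hammingNorm v = 4 := by
    ext v
    simp only [Finset.mem_filter, Finset.mem_univ, true_and, mem_dualCode_iff hq.le,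
      hwt_eq_hammingNorm, u]
  rw [hdual, (isMDS_ker_parityCheck hinj hu).card_hammingNorm_eq, hF, Fintype.card_fin,
    Nat.cast_mul, cast_succ_choose_four, Nat.cast_sub hq.le]
  ring
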